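/- Let ψ be a positive probability density on (0,∞) that is decreasing on (0,∞), let f be a probability density supported on (0,∞), and let g be a probability density supported on (−∞,0). Then D(f ∗ g | ψ) ≤ D(f | ψ) + e^{−1}, where (f ∗ g)(x) := ∫ f(x−y) g(y) dy denotes the convolution. -/

import Mathlib

open MeasureTheory Set
open scoped ENNReal

/-- `L x = x * log x` (with `L 0 = 0`, automatic since `Real.log 0 = 0`). -/
noncomputable def L (x : ℝ) : ℝ := x * Real.log x

/-- The relative entropy `D(f | ψ) = ∫₀^∞ L (f x / ψ x) * ψ x dx`, with values in
`(-∞, ∞]`, realized in `EReal`.  Since `L t ≥ -e⁻¹` for `t ≥ 0`, for a probability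
density `ψ` on `(0,∞)` the integrand shifted by `e⁻¹ * ψ` is nonnegative, so this
is faithfully computed by a Lebesgue integral shifted back by `e⁻¹`. -/
noncomputable def relEnt (f ψ : ℝ → ℝ) : EReal :=
  ((∫⁻ x in Ioi (0 : ℝ),
      ENNReal.ofReal (L (f x / ψ x) * ψ x + Real.exp (-1) * ψ x) : ℝ≥0∞) : EReal)
    - ((Real.exp (-1) : ℝ) : EReal)

/-!
Fix `x > 0` and average over `y ≤ 0` against a probability measure `ν`. Jensen's inequality for
`L` bounds the integrand of the relative entropy of the convolution at `x` by the average of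
`L (f (x - y) / ψ x) * ψ x`. Since `x - y ≥ x` and `ψ` is decreasing, `ψ x` may be replaced there
by `ψ (x - y)`. The shift that makes the integrand nonnegative then changes from `e⁻¹ * ψ x` to
`e⁻¹ * ψ (x - y) ≥ 0`, a cost of at most `e⁻¹ * ψ x`, which integrates to `e⁻¹`. Finally,
`x ↦ x - y` maps `(0, ∞)` into itself, so the integral over `x > 0` of the average is at most that
of the integrand of `D(f | ψ)`.
-/

lemma continuous_L : Continuous L := Real.continuous_mul_log

lemma convexOn_L : ConvexOn ℝ (Ici 0) L := Real.convexOn_mul_log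

lemma neg_exp_neg_one_le_L {t : ℝ} (ht : 0 ≤ t) : -Real.exp (-1) ≤ L t := by
  rcases ht.eq_or_lt with rfl | ht
  · simp [L, Real.exp_nonneg]
  · have h := Real.mul_exp_neg_le_exp_neg_one (-Real.log t)
    rw [neg_neg, Real.exp_log ht] at h
    rw [L]
    linarith

lemma L_div_mul_self (u : ℝ) {q : ℝ} (hq : q ≠ 0) : L (u / q) * q = u * Real.log (u / q) := by
  rw [L, mul_right_comm, div_mul_cancel₀ u hq]

lemma L_div_mul_le_of_le {u p q : ℝ} (hu : 0 ≤ u) (hp : 0 < p) (hpq : p ≤ q) :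
    L (u / q) * q ≤ L (u / p) * p := by
  have hq : 0 < q := hp.trans_le hpq
  rw [L_div_mul_self u hp.ne', L_div_mul_self u hq.ne']
  rcases hu.eq_or_lt with rfl | hu
  · simp
  · gcongr

section Measure

variable {α : Type*} {mα : MeasurableSpace α}

section Jensen

variable {E : Type*} [NormedAddCommGroup E] [NormedSpace ℝ E] [CompleteSpace E]

lemma ofReal_map_integral_le_lintegral_ofReal {μ : Measure α} [IsProbabilityMeasure μ]
    {s : Set E} {φ : E → ℝ} {X : α → E} (hφ : ConvexOn ℝ s φ) (hφc : ContinuousOn φ s)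
    (hs : IsClosed s) (hφ0 : ∀ u ∈ s, 0 ≤ φ u) (hXs : ∀ᵐ a ∂μ, X a ∈ s) (hX : Integrable X μ)
    (hφX : AEStronglyMeasurable (fun a => φ (X a)) μ) :
    ENNReal.ofReal (φ (∫ a, X a ∂μ)) ≤ ∫⁻ a, ENNReal.ofReal (φ (X a)) ∂μ := by
  have hφX0 : 0 ≤ᵐ[μ] fun a => φ (X a) := hXs.mono fun a ha => hφ0 _ ha
  by_cases htop : ∫⁻ a, ENNReal.ofReal (φ (X a)) ∂μ = ∞
  · simp only [htop, le_top]
  · have hint : Integrable (fun a => φ (X a)) μ :=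
      (lintegral_ofReal_ne_top_iff_integrable hφX hφX0).1 htop
    rw [← ofReal_integral_eq_lintegral_ofReal hint hφX0]
    exact ENNReal.ofReal_le_ofReal (hφ.map_integral_le hφc hs hXs hX hint)

end Jensen

section WithDensity

variable {μ : Measure α} {g : α → ℝ}

lemma lintegral_ofReal_eq_one (hg0 : 0 ≤ᵐ[μ] g) (hg1 : ∫ a, g a ∂μ = 1) :
    ∫⁻ a, ENNReal.ofReal (g a) ∂μ = 1 := by
  rw [← ofReal_integral_eq_lintegral_ofReal (integrable_of_integral_eq_one hg1) hg0, hg1,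
    ENNReal.ofReal_one]

lemma isProbabilityMeasure_withDensity_ofReal (hg0 : 0 ≤ᵐ[μ] g) (hg1 : ∫ a, g a ∂μ = 1) :
    IsProbabilityMeasure (μ.withDensity fun a => ENNReal.ofReal (g a)) := by
  refine ⟨?_⟩
  rw [withDensity_apply _ MeasurableSet.univ, setLIntegral_univ, lintegral_ofReal_eq_one hg0 hg1]

lemma ae_mem_withDensity_ofReal (hg : AEMeasurable g μ) {s : Set α} (hgs : ∀ a ∉ s, g a = 0) :
    ∀ᵐ a ∂μ.withDensity (fun a => ENNReal.ofReal (g a)), a ∈ s := by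
  rw [ae_withDensity_iff' hg.ennreal_ofReal]
  refine .of_forall fun a ha => ?_
  contrapose! ha
  rw [hgs a ha, ENNReal.ofReal_zero]

lemma integral_withDensity_ofReal (hg : AEMeasurable g μ) (hg0 : 0 ≤ᵐ[μ] g) (h : α → ℝ) :
    ∫ a, h a ∂μ.withDensity (fun a => ENNReal.ofReal (g a)) = ∫ a, h a * g a ∂μ := by
  rw [integral_withDensity_eq_integral_toReal_smul₀ hg.ennreal_ofReal
    (.of_forall fun _ => ENNReal.ofReal_lt_top)]
  refine integral_congr_ae (hg0.mono fun a ha => ?_)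
  simp only [ENNReal.toReal_ofReal ha, smul_eq_mul, mul_comm]

end WithDensity

section Translation

variable {G : Type*} [AddGroup G] [MeasurableSpace G] {μ ν : Measure G}
  [μ.IsAddRightInvariant] {s : Set G} {F : G → ℝ≥0∞}

lemma setLIntegral_sub_right_le [MeasurableAdd G] (hs : MeasurableSet s) {y : G}
    (hy : ∀ x ∈ s, x - y ∈ s) :
    ∫⁻ x in s, F (x - y) ∂μ ≤ ∫⁻ x in s, F x ∂μ := by
  calc ∫⁻ x in s, F (x - y) ∂μ
      = ∫⁻ x in s, s.indicator F (x - y) ∂μ :=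
        setLIntegral_congr_fun hs fun x hx => (indicator_of_mem (hy x hx) F).symm
    _ ≤ ∫⁻ x, s.indicator F (x - y) ∂μ := setLIntegral_le_lintegral s _
    _ = ∫⁻ x in s, F x ∂μ := by
      rw [lintegral_sub_right_eq_self (s.indicator F) y, lintegral_indicator hs]

lemma setLIntegral_lintegral_sub_le [MeasurableAdd₂ G] [MeasurableNeg G] [SFinite μ]
    [IsProbabilityMeasure ν] (hs : MeasurableSet s) (hF : Measurable F)
    (hν : ∀ᵐ y ∂ν, ∀ x ∈ s, x - y ∈ s) :
    ∫⁻ x in s, ∫⁻ y, F (x - y) ∂ν ∂μ ≤ ∫⁻ x in s, F x ∂μ := by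
  calc ∫⁻ x in s, ∫⁻ y, F (x - y) ∂ν ∂μ
      = ∫⁻ y, ∫⁻ x in s, F (x - y) ∂μ ∂ν := lintegral_lintegral_swap (by fun_prop)
    _ ≤ ∫⁻ _, ∫⁻ x in s, F x ∂μ ∂ν :=
      lintegral_mono_ae (hν.mono fun y hy => setLIntegral_sub_right_le hs hy)
    _ = ∫⁻ x in s, F x ∂μ := by simp only [lintegral_const, measure_univ, mul_one]

end Translation

end Measure

/-- The integrand of `relEnt` at a point where the two densities take the values `u` and `q`:
the perspective `L (u / q) * q` of `L`, shifted by `e⁻¹ * q` so as to be nonnegative. -/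
noncomputable def entropyCost (u q : ℝ) : ℝ≥0∞ :=
  ENNReal.ofReal (L (u / q) * q + Real.exp (-1) * q)

lemma relEnt_eq_lintegral_entropyCost_sub (f ψ : ℝ → ℝ) :
    relEnt f ψ = ((∫⁻ x in Ioi (0 : ℝ), entropyCost (f x) (ψ x) : ℝ≥0∞) : EReal)
      - ((Real.exp (-1) : ℝ) : EReal) := rfl

lemma measurable_entropyCost {α : Type*} {mα : MeasurableSpace α} {u q : α → ℝ}
    (hu : Measurable u) (hq : Measurable q) : Measurable fun a => entropyCost (u a) (q a) := by
  have hL : Measurable L := continuous_L.measurable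
  unfold entropyCost
  fun_prop

lemma entropyCost_zero_left (q : ℝ) : entropyCost 0 q = ENNReal.ofReal (Real.exp (-1) * q) := by
  simp [entropyCost, L]

lemma entropyCost_eq_mul (u : ℝ) {q : ℝ} (hq : 0 ≤ q) :
    entropyCost u q = ENNReal.ofReal (L (u / q) + Real.exp (-1)) * ENNReal.ofReal q := by
  rw [entropyCost, ← add_mul, ENNReal.ofReal_mul' hq]

lemma entropyCost_le_add {u p q : ℝ} (hu : 0 ≤ u) (hp : 0 < p) (hpq : p ≤ q) :
    entropyCost u q ≤ entropyCost u p + ENNReal.ofReal (Real.exp (-1) * q) := by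
  have hcost : L (u / q) * q ≤ L (u / p) * p + Real.exp (-1) * p :=
    le_add_of_le_of_nonneg (L_div_mul_le_of_le hu hp hpq) (by positivity)
  exact (ENNReal.ofReal_le_ofReal (by gcongr)).trans ENNReal.ofReal_add_le

section Average

variable {α : Type*} {mα : MeasurableSpace α} {ν : Measure α} [IsProbabilityMeasure ν]
  {X P : α → ℝ} {q : ℝ}

lemma entropyCost_integral_le (hq : 0 ≤ q) (hX : Integrable X ν) (hX0 : 0 ≤ᵐ[ν] X) :
    entropyCost (∫ a, X a ∂ν) q ≤ ∫⁻ a, entropyCost (X a) q ∂ν := by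
  have jensen := ofReal_map_integral_le_lintegral_ofReal
    (convexOn_L.add_const (Real.exp (-1))) (continuous_L.add_const _).continuousOn isClosed_Ici
    (fun t ht => neg_le_iff_add_nonneg.1 (neg_exp_neg_one_le_L ht))
    (hX0.mono fun a ha => div_nonneg ha hq) (hX.div_const q)
    ((continuous_L.add_const _).comp_aestronglyMeasurable (hX.div_const q).aestronglyMeasurable)
  simp only [Pi.add_apply, integral_div] at jensen
  simp only [entropyCost_eq_mul _ hq]
  rw [lintegral_mul_const' _ _ ENNReal.ofReal_ne_top]
  gcongr

lemma entropyCost_integral_le_add (hX0 : 0 ≤ᵐ[ν] X) (hP : ∀ᵐ a ∂ν, 0 < P a ∧ P a ≤ q) :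
    entropyCost (∫ a, X a ∂ν) q
      ≤ (∫⁻ a, entropyCost (X a) (P a) ∂ν) + ENNReal.ofReal (Real.exp (-1) * q) := by
  by_cases hX : Integrable X ν
  · obtain ⟨a, ha⟩ := hP.exists
    have hq : 0 ≤ q := (ha.1.trans_le ha.2).le
    calc entropyCost (∫ a, X a ∂ν) q
        ≤ ∫⁻ a, entropyCost (X a) q ∂ν := entropyCost_integral_le hq hX hX0
      _ ≤ ∫⁻ a, (entropyCost (X a) (P a) + ENNReal.ofReal (Real.exp (-1) * q)) ∂ν := by
        refine lintegral_mono_ae ?_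
        filter_upwards [hX0, hP] with a hXa hPa
        exact entropyCost_le_add hXa hPa.1 hPa.2
      _ = (∫⁻ a, entropyCost (X a) (P a) ∂ν) + ENNReal.ofReal (Real.exp (-1) * q) := by
        rw [lintegral_add_right _ measurable_const, lintegral_const, measure_univ, mul_one]
  · -- A divergent integral takes the junk value `0`; for measurable `X` the right-hand side is
    -- then `∞` anyway, since `u ≤ L (u / p) * p + p`.
    rw [integral_undef hX, entropyCost_zero_left]
    exact le_add_self

end Average

theorem stmt5_general (ψ : ℝ → ℝ) (hψmeas : Measurable ψ)
    (hψpos : ∀ x ∈ Ioi (0 : ℝ), 0 < ψ x) (hψprob : ∫ x in Ioi (0 : ℝ), ψ x = 1)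
    (hψanti : AntitoneOn ψ (Ioi (0 : ℝ)))
    (f : ℝ → ℝ) (hfmeas : Measurable f) (hf0 : ∀ x ∈ Ioi (0 : ℝ), 0 ≤ f x)
    (ν : Measure ℝ) [IsProbabilityMeasure ν] (hν : ∀ᵐ y ∂ν, y ≤ 0) :
    relEnt (fun x => ∫ y, f (x - y) ∂ν) ψ ≤ relEnt f ψ + ((Real.exp (-1) : ℝ) : EReal) := by
  have hshift : ∀ᵐ y ∂ν, ∀ x ∈ Ioi (0 : ℝ), x - y ∈ Ioi (0 : ℝ) :=
    hν.mono fun y hy x hx => sub_pos.2 (hy.trans_lt hx)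
  have hpointwise : ∀ x ∈ Ioi (0 : ℝ), entropyCost (∫ y, f (x - y) ∂ν) (ψ x)
      ≤ (∫⁻ y, entropyCost (f (x - y)) (ψ (x - y)) ∂ν)
        + ENNReal.ofReal (Real.exp (-1) * ψ x) := by
    intro x hx
    refine entropyCost_integral_le_add (hshift.mono fun y hy => hf0 _ (hy x hx)) ?_
    filter_upwards [hν, hshift] with y hy hxy
    exact ⟨hψpos _ (hxy x hx), hψanti hx (hxy x hx) (by linarith)⟩
  have hcost : Measurable fun x => entropyCost (f x) (ψ x) := measurable_entropyCost hfmeas hψmeas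
  have hψ0 : 0 ≤ᵐ[volume.restrict (Ioi 0)] ψ :=
    (ae_restrict_mem measurableSet_Ioi).mono fun x hx => (hψpos x hx).le
  have hmass : ∫⁻ x in Ioi (0 : ℝ), ENNReal.ofReal (Real.exp (-1) * ψ x)
      = ENNReal.ofReal (Real.exp (-1)) := by
    simp only [ENNReal.ofReal_mul (Real.exp_nonneg _)]
    rw [lintegral_const_mul' _ _ ENNReal.ofReal_ne_top, lintegral_ofReal_eq_one hψ0 hψprob, mul_one]
  have hintegrated : ∫⁻ x in Ioi (0 : ℝ), entropyCost (∫ y, f (x - y) ∂ν) (ψ x)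
      ≤ (∫⁻ x in Ioi (0 : ℝ), entropyCost (f x) (ψ x)) + ENNReal.ofReal (Real.exp (-1)) := by
    refine (setLIntegral_mono' measurableSet_Ioi hpointwise).trans ?_
    rw [lintegral_add_right _ (by fun_prop), hmass]
    exact add_le_add (setLIntegral_lintegral_sub_le measurableSet_Ioi hcost hshift) le_rfl
  simp only [relEnt_eq_lintegral_entropyCost_sub, EReal.sub_add_cancel]
  refine EReal.sub_le_of_le_add ((EReal.coe_ennreal_le_coe_ennreal_iff.2 hintegrated).trans_eq ?_)
  rw [EReal.coe_ennreal_add, EReal.coe_ennreal_ofReal, max_eq_left (Real.exp_nonneg _)]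

theorem stmt5 (ψ : ℝ → ℝ) (hψmeas : Measurable ψ)
    (hψpos : ∀ x ∈ Ioi (0 : ℝ), 0 < ψ x)
    (hψint : IntegrableOn ψ (Ioi (0 : ℝ)))
    (hψprob : ∫ x in Ioi (0 : ℝ), ψ x = 1)
    (hψanti : AntitoneOn ψ (Ioi (0 : ℝ)))
    (f g : ℝ → ℝ)
    (hfmeas : Measurable f) (hf0 : ∀ x, 0 ≤ f x)
    (hfsupp : ∀ x ≤ (0 : ℝ), f x = 0)
    (hfint : Integrable f) (hfprob : ∫ x, f x = 1)
    (hgmeas : Measurable g) (hg0 : ∀ x, 0 ≤ g x)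
    (hgsupp : ∀ x, (0 : ℝ) ≤ x → g x = 0)
    (hgint : Integrable g) (hgprob : ∫ x, g x = 1) :
    relEnt (fun x => ∫ y, f (x - y) * g y) ψ
      ≤ relEnt f ψ + ((Real.exp (-1) : ℝ) : EReal) := by
  have := isProbabilityMeasure_withDensity_ofReal (.of_forall hg0) hgprob
  simpa only [integral_withDensity_ofReal hgmeas.aemeasurable (.of_forall hg0)] using
    stmt5_general ψ hψmeas hψpos hψprob hψanti f hfmeas (fun x _ => hf0 x) _
      (ae_mem_withDensity_ofReal (s := Iic 0) hgmeas.aemeasurable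
        fun y hy => hgsupp y (not_le.1 hy).le)
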